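/- arXiv:2112.02761 — 2 statements merged into one kernel-verified Lean document; each statement's English description precedes it below -/
import Mathlib

section
/- Let d ≥ 2, let σ be a permutation of {1,…,d} with permutation matrix P ∈ ℝ^{d×d} (P_{ij} = 1 if i = σ(j), else 0), let s_1,…,s_d > 0 and Σ = diag(s_1²,…,s_d²), and let ν > 0. For l ∈ ℝ^{d(d−1)/2} let L(l) ∈ ℝ^{d×d} be the strictly lower-triangular matrix whose (i,j) entries for j < i are the components of l, and set Θ(l) = (I − P L(l) Pᵀ)ᵀ Σ^{−1} (I − P L(l) Pᵀ). Let G ∈ ℝ^{d×d} be the strictly lower-triangular all-ones matrix (G_{ij} = 1 iff j < i), and for x ∈ ℝ^d let D = diag(P G Pᵀ (x ∘ x)) where x ∘ x is the entrywise square. Let D′ and Σ′ ∈ ℝ^{(d−1)×(d−1)} be obtained from D and Σ by deleting the row and column with index σ(1), and let S ∈ ℝ^{d×d} be diagonal with S_{jj} = ν² D_{jj} / (s_j² (s_j² + ν² D_{jj})). Then for every x ∈ ℝ^d all of whose coordinates are nonzero, ∫_{ℝ^{d(d−1)/2}} (2π)^{−d/2} √(det Θ(l)) · exp(−½ xᵀ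 Θ(l) x) · (2πν²)^{−d(d−1)/4} exp(−‖l‖²/(2ν²)) dl = (2π)^{−d/2} (∏_{j=1}^d s_j)^{−1} ν^{−(d−1)} (det D′)^{−1/2} (det(Σ′^{−1} + ν^{−2} D′^{−1}))^{−1/2} exp(−½ xᵀ Σ^{−1} x + ½ xᵀ S x). (This is Theorem 1 of the paper: the Gaussian prior on the edge weights l of a linear-Gaussian SEM can be analytically marginalized, yielding this closed-form marginal likelihood p(x | P, Σ, ν).) -/
open Matrix MeasureTheory Real Finset

/-!
For a fixed data point `x`, the residual `(1 - W) x = x - A l` is affine in the edge weights `l`.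
Each edge enters only the row of its child, so the rows of the design matrix `A` are orthogonal and
`A Aᵀ = D`; hence under the prior `A l` has independent `N(0, ν² Dⱼⱼ)` coordinates. Since
`det (1 - W) = 1`, the likelihood is the product of the densities of `N((A l)ⱼ, sⱼ²)` at `xⱼ`, and
mixing a Gaussian mean over a Gaussian adds the variances, so the marginal likelihood is
`∏ⱼ N(xⱼ; 0, sⱼ² + ν² Dⱼⱼ)`. The root `σ(1)` has no parents, so `D` vanishes there; splitting off
this coordinate and factoring `sⱼ² + ν² Dⱼⱼ = sⱼ² ν² Dⱼⱼ (sⱼ⁻² + ν⁻² Dⱼⱼ⁻¹)` at the others gives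
the closed form.
-/

section LinearAlgebra

theorem inv_diagonal_of_ne_zero {n K : Type*} [Fintype n] [DecidableEq n] [Field K] {v : n → K}
    (hv : ∀ i, v i ≠ 0) : (diagonal v)⁻¹ = diagonal fun i => (v i)⁻¹ :=
  inv_eq_right_inv (by simp [diagonal_mul_diagonal, mul_inv_cancel₀ (hv _)])

theorem dotProduct_diagonal_mulVec {n R : Type*} [Fintype n] [DecidableEq n] [CommSemiring R]
    (v x : n → R) : x ⬝ᵥ (diagonal v *ᵥ x) = ∑ i, v i * x i ^ 2 := by
  simp only [dotProduct, mulVec_diagonal, sq, mul_left_comm]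

theorem mul_mul_transpose_eq_submatrix_symm {m n R : Type*} [Fintype m] [DecidableEq n]
    [NonAssocSemiring R] {σ : m ≃ n} {P : Matrix n m R}
    (hP : ∀ i j, P i j = if i = σ j then 1 else 0) (M : Matrix m m R) :
    P * M * Pᵀ = M.submatrix σ.symm σ.symm := by
  classical
  ext i j
  simp [mul_apply, hP, ← σ.symm_apply_eq]

theorem sum_mul_vecMul_sq_of_mul_diagonal_mul_transpose {m n R : Type*} [Fintype m] [Fintype n]
    [DecidableEq m] [DecidableEq n] [CommRing R] {A : Matrix m n R} {v : n → R} {w : m → R}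
    (hA : A * diagonal v * Aᵀ = diagonal w) (u : m → R) :
    ∑ j, v j * (u ᵥ* A) j ^ 2 = ∑ i, w i * u i ^ 2 := by
  rw [← dotProduct_diagonal_mulVec, ← dotProduct_diagonal_mulVec, ← hA, ← mulVec_mulVec,
    ← mulVec_mulVec, mulVec_transpose, ← dotProduct_mulVec]

theorem dotProduct_inv_diagonal_mulVec_sub {n K : Type*} [Fintype n] [DecidableEq n] [Field K]
    {v b : n → K} (hv : ∀ j, v j ≠ 0) (hvb : ∀ j, v j + b j ≠ 0) (x : n → K) :
    x ⬝ᵥ ((diagonal v)⁻¹ *ᵥ x) - x ⬝ᵥ ((diagonal fun j => b j / (v j * (v j + b j))) *ᵥ x) =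
      ∑ j, (v j + b j)⁻¹ * x j ^ 2 := by
  rw [inv_diagonal_of_ne_zero hv, dotProduct_diagonal_mulVec, dotProduct_diagonal_mulVec,
    ← sum_sub_distrib]
  refine sum_congr rfl fun j _ => ?_
  have := hv j
  have := hvb j
  field_simp
  ring

theorem det_add_smul_eq {m K : Type*} [Fintype m] [DecidableEq m] [Field K] {A B : Matrix m m K}
    (hA : A.det ≠ 0) (hB : B.det ≠ 0) {c : K} (hc : c ≠ 0) :
    (A + c • B).det = A.det * (A⁻¹ + c⁻¹ • B⁻¹).det * (c ^ Fintype.card m * B.det) := by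
  rw [← det_smul, ← det_mul, ← det_mul, mul_add, mul_nonsing_inv _ hA.isUnit, add_mul, one_mul,
    Matrix.mul_smul A, Matrix.smul_mul, Matrix.mul_smul _ c, smul_smul, inv_mul_cancel₀ hc,
    one_smul, nonsing_inv_mul_cancel_right _ _ hB.isUnit, add_comm]

end LinearAlgebra

section Gaussian

open ProbabilityTheory
open scoped NNReal ENNReal

variable {m n ι : Type*} [Fintype m] [Fintype n] [Fintype ι]

theorem gaussianPDFReal_mul_gaussianPDFReal (μ y u : ℝ) {t w : ℝ≥0} (ht : t ≠ 0) (hw : w ≠ 0) :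
    gaussianPDFReal u t y * gaussianPDFReal μ w u =
      gaussianPDFReal μ (t + w) y *
        gaussianPDFReal ((t * μ + w * y) / (t + w)) (t * w / (t + w)) u := by
  have : (0 : ℝ) < t := NNReal.coe_pos.2 ht.bot_lt
  have : (0 : ℝ) < w := NNReal.coe_pos.2 hw.bot_lt
  simp only [gaussianPDFReal, NNReal.coe_add, NNReal.coe_mul, NNReal.coe_div]
  rw [mul_mul_mul_comm, mul_mul_mul_comm (√(2 * π * (t + w)))⁻¹, ← mul_inv, ← mul_inv,
    ← sqrt_mul (by positivity), ← sqrt_mul (by positivity), ← exp_add, ← exp_add]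
  congr 1
  · field_simp
  · congr 1
    field_simp
    ring

theorem integral_gaussianPDFReal_gaussianReal (μ y : ℝ) {t : ℝ≥0} (ht : t ≠ 0) (w : ℝ≥0) :
    ∫ u, gaussianPDFReal u t y ∂gaussianReal μ w = gaussianPDFReal μ (t + w) y := by
  obtain rfl | hw := eq_or_ne w 0
  · simp
  · have hposterior : t * w / (t + w) ≠ 0 := by positivity
    simp_rw [integral_gaussianReal_eq_integral_smul hw, smul_eq_mul,
      mul_comm _ (gaussianPDFReal _ t y), gaussianPDFReal_mul_gaussianPDFReal μ y _ ht hw,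
      integral_const_mul, integral_gaussianPDFReal_eq_one _ hposterior, mul_one]

theorem charFunDual_gaussianReal (μ : ℝ) (v : ℝ≥0) (L : StrongDual ℝ ℝ) :
    charFunDual (gaussianReal μ v) L =
      Complex.exp (L 1 * μ * Complex.I - v * (L 1 : ℂ) ^ 2 / 2) := by
  have hL (x : ℝ) : L x = L 1 * x := by
    rw [mul_comm, ← smul_eq_mul, ← L.map_smul, smul_eq_mul, mul_one]
  rw [← charFun_gaussianReal, charFun_apply_real, charFunDual_apply]
  congr with u
  rw [hL u, Complex.ofReal_mul]

theorem charFunDual_pi_gaussianReal [DecidableEq ι] (μ : ι → ℝ) (v : ι → ℝ≥0)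
    (L : StrongDual ℝ (ι → ℝ)) :
    charFunDual (Measure.pi fun i => gaussianReal (μ i) (v i)) L =
      Complex.exp (L μ * Complex.I - (∑ i, v i * L (Pi.single i 1) ^ 2 : ℝ) / 2) := by
  have hμ : L μ = ∑ i, L (Pi.single i 1) * μ i := by
    conv_lhs => rw [pi_eq_sum_univ' μ]
    simp [mul_comm]
  simp [charFunDual_pi, charFunDual_gaussianReal, ← Complex.exp_sum, hμ, Finset.sum_div,
    Finset.sum_mul, Finset.sum_sub_distrib]

theorem map_mulVec_pi_gaussianReal [DecidableEq m] [DecidableEq n] {A : Matrix m n ℝ}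
    {v : n → ℝ≥0} {w : m → ℝ≥0}
    (hA : A * diagonal (fun j => (v j : ℝ)) * Aᵀ = diagonal fun i => (w i : ℝ)) (μ : n → ℝ) :
    (Measure.pi fun j => gaussianReal (μ j) (v j)).map (A *ᵥ ·) =
      Measure.pi fun i => gaussianReal ((A *ᵥ μ) i) (w i) := by
  let f : (n → ℝ) →L[ℝ] (m → ℝ) := A.mulVecLin.toContinuousLinearMap
  change (Measure.pi _).map f = _
  have := Measure.isProbabilityMeasure_map (μ := Measure.pi fun j => gaussianReal (μ j) (v j))
    f.continuous.aemeasurable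
  refine Measure.ext_of_charFunDual (funext fun L => ?_)
  have hL (j : n) : L (f (Pi.single j 1)) = ((fun i => L (Pi.single i 1)) ᵥ* A) j := by
    have : f (Pi.single j 1) = ∑ i, A i j • Pi.single i 1 := by
      ext; simp [f, Finset.sum_apply, Pi.single_apply]
    simp [this, vecMul, dotProduct, mul_comm]
  rw [charFunDual_map, charFunDual_pi_gaussianReal, charFunDual_pi_gaussianReal]
  simp only [ContinuousLinearMap.comp_apply, hL,
    sum_mul_vecMul_sq_of_mul_diagonal_mul_transpose hA]
  rfl

theorem integral_prod_gaussianPDFReal_sub_mulVec [DecidableEq m] [DecidableEq n] {A : Matrix m n ℝ}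
    {v : n → ℝ≥0} {w : m → ℝ≥0}
    (hA : A * diagonal (fun j => (v j : ℝ)) * Aᵀ = diagonal fun i => (w i : ℝ)) {t : m → ℝ≥0}
    (ht : ∀ i, t i ≠ 0) (μ : n → ℝ) (y : m → ℝ) :
    ∫ l, ∏ i, gaussianPDFReal 0 (t i) ((y - A *ᵥ l) i)
        ∂Measure.pi (fun j => gaussianReal (μ j) (v j)) =
      ∏ i, gaussianPDFReal ((A *ᵥ μ) i) (t i + w i) (y i) := by
  have hmeas : Measurable fun r : m → ℝ => ∏ i, gaussianPDFReal (r i) (t i) (y i) := by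
    simp only [gaussianPDFReal]; fun_prop
  simp_rw [Pi.sub_apply, gaussianPDFReal_sub, zero_add]
  rw [← integral_map (φ := (A *ᵥ ·)) (by fun_prop) hmeas.aestronglyMeasurable,
    map_mulVec_pi_gaussianReal hA,
    integral_fintype_prod_eq_prod fun i r => gaussianPDFReal r (t i) (y i)]
  simp_rw [integral_gaussianPDFReal_gaussianReal _ _ (ht _)]

theorem pi_gaussianReal_eq_withDensity (μ : ι → ℝ) {v : ι → ℝ≥0} (hv : ∀ i, v i ≠ 0) :
    Measure.pi (fun i => gaussianReal (μ i) (v i)) =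
      volume.withDensity fun x => ENNReal.ofReal (∏ i, gaussianPDFReal (μ i) (v i) (x i)) := by
  refine Measure.pi_eq fun s hs => ?_
  rw [withDensity_apply _ (.univ_pi hs), volume_pi, Measure.restrict_pi_pi,
    ← ofReal_integral_eq_lintegral_ofReal
      (Integrable.fintype_prod fun i => (integrable_gaussianPDFReal _ _).restrict)
      (ae_of_all _ fun x => prod_nonneg fun i _ => gaussianPDFReal_nonneg _ _ _),
    integral_fintype_prod_eq_prod fun i => gaussianPDFReal (μ i) (v i),
    ENNReal.ofReal_prod_of_nonneg fun i _ => integral_nonneg (gaussianPDFReal_nonneg _ _)]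
  simp_rw [gaussianReal_apply_eq_integral _ (hv _)]

theorem integral_pi_gaussianReal_eq_integral_smul {E : Type*} [NormedAddCommGroup E]
    [NormedSpace ℝ E] (μ : ι → ℝ) {v : ι → ℝ≥0} (hv : ∀ i, v i ≠ 0) (f : (ι → ℝ) → E) :
    ∫ x, f x ∂Measure.pi (fun i => gaussianReal (μ i) (v i)) =
      ∫ x, (∏ i, gaussianPDFReal (μ i) (v i) (x i)) • f x := by
  have hmeas : Measurable fun x : ι → ℝ => ∏ i, gaussianPDFReal (μ i) (v i) (x i) := by
    fun_prop
  rw [pi_gaussianReal_eq_withDensity μ hv, integral_withDensity_eq_integral_toReal_smul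
    hmeas.ennreal_ofReal (ae_of_all _ fun _ => ENNReal.ofReal_lt_top)]
  simp_rw [ENNReal.toReal_ofReal (prod_nonneg fun _ _ => gaussianPDFReal_nonneg _ _ _)]

theorem prod_gaussianPDFReal (v : ι → ℝ≥0) (y : ι → ℝ) :
    ∏ i, gaussianPDFReal 0 (v i) (y i) =
      (2 * π) ^ (-(Fintype.card ι : ℝ) / 2) * (∏ i, √(v i : ℝ))⁻¹ *
        exp (-(1 / 2) * ∑ i, (v i : ℝ)⁻¹ * y i ^ 2) := by
  have hconst : (2 * π) ^ (-(Fintype.card ι : ℝ) / 2) = ∏ _i : ι, (√(2 * π))⁻¹ := by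
    rw [prod_const, card_univ, sqrt_eq_rpow, ← rpow_neg two_pi_pos.le,
      ← rpow_mul_natCast two_pi_pos.le]
    congr 1
    ring
  have hfactor (i : ι) : gaussianPDFReal 0 (v i) (y i) =
      (√(2 * π))⁻¹ * (√(v i : ℝ))⁻¹ * exp (-(1 / 2) * ((v i : ℝ)⁻¹ * y i ^ 2)) := by
    rw [gaussianPDFReal, sqrt_mul two_pi_pos.le, mul_inv, sub_zero]
    congr 2
    ring
  simp_rw [hfactor, prod_mul_distrib, ← exp_sum, ← mul_sum, hconst, prod_inv_distrib]

theorem prod_gaussianPDFReal_const (v : ℝ≥0) (l : ι → ℝ) :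
    ∏ i, gaussianPDFReal 0 v (l i) =
      (2 * π * v) ^ (-(Fintype.card ι : ℝ) / 2) * exp (-(∑ i, l i ^ 2) / (2 * v)) := by
  have hv : 0 ≤ 2 * π * (v : ℝ) := by positivity
  simp_rw [gaussianPDFReal, sub_zero, prod_mul_distrib, prod_const, card_univ, ← exp_sum,
    ← sum_div, sum_neg_distrib, sqrt_eq_rpow, ← rpow_neg hv, ← rpow_mul_natCast hv]
  ring_nf

variable [DecidableEq n]

/-- The density at `x` of the centred Gaussian distribution on `n → ℝ` with precision matrix `Θ`
(the inverse of its covariance matrix). -/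
noncomputable def precisionPDF (Θ : Matrix n n ℝ) (x : n → ℝ) : ℝ :=
  (2 * π) ^ (-(Fintype.card n : ℝ) / 2) * √Θ.det * exp (-(1 / 2) * (x ⬝ᵥ (Θ *ᵥ x)))

theorem precisionPDF_transpose_mul_inv_diagonal_mul (A : Matrix n n ℝ) {v : n → ℝ≥0}
    (hv : ∀ i, v i ≠ 0) (x : n → ℝ) :
    precisionPDF (Aᵀ * (diagonal fun i => (v i : ℝ))⁻¹ * A) x =
      |A.det| * ∏ i, gaussianPDFReal 0 (v i) ((A *ᵥ x) i) := by
  have hquad : x ⬝ᵥ ((Aᵀ * (diagonal fun i => (v i : ℝ)⁻¹) * A) *ᵥ x) =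
      ∑ i, (v i : ℝ)⁻¹ * (A *ᵥ x) i ^ 2 := by
    rw [← dotProduct_diagonal_mulVec, ← mulVec_mulVec, ← mulVec_mulVec, dotProduct_mulVec,
      vecMul_transpose]
  have hdet : √(Aᵀ * (diagonal fun i => (v i : ℝ)⁻¹) * A).det = |A.det| * (∏ i, √(v i : ℝ))⁻¹ := by
    rw [det_mul, det_mul, det_transpose, det_diagonal, mul_right_comm, sqrt_mul (mul_self_nonneg _),
      sqrt_mul_self_eq_abs, prod_inv_distrib, sqrt_inv, sqrt_prod _ fun i _ => (v i).coe_nonneg]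
  rw [inv_diagonal_of_ne_zero fun i => NNReal.coe_ne_zero.2 (hv i), precisionPDF, hquad, hdet,
    prod_gaussianPDFReal]
  ring

end Gaussian

section SEM

open ProbabilityTheory
open scoped NNReal

/-- The potential edges of a directed acyclic graph whose nodes are enumerated in topological order
by `ι`: the pair `(i, j)` with `j < i` stands for the edge from the parent `j` to the child `i`,
matching the position of its weight in a strictly lower triangular matrix. -/
abbrev Edge (ι : Type*) [LT ι] : Type _ := {p : ι × ι // p.2 < p.1}

variable {ι n : Type*} [LinearOrder ι]

theorem card_edge [Fintype ι] :
    (Fintype.card (Edge ι) : ℝ) = Fintype.card ι * (Fintype.card ι - 1) / 2 := by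
  rw [← Nat.cast_choose_two, ← Fintype.card_product_filter_lt (α := ι), ← Fintype.card_subtype]
  exact_mod_cast Fintype.card_congr <| Equiv.subtypeEquiv (p := fun p : ι × ι => p.2 < p.1)
    (q := fun p => p.1 < p.2) (Equiv.prodComm ι ι) fun _ => Iff.rfl

theorem sum_edge [Fintype ι] {M : Type*} [AddCommMonoid M] (f : ι → ι → M) :
    ∑ e : Edge ι, f e.1.1 e.1.2 = ∑ i, ∑ j, if j < i then f i j else 0 := by
  rw [← Fintype.sum_prod_type' fun i j => if j < i then f i j else 0, ← sum_filter]
  exact (sum_subtype _ (by simp) fun p : ι × ι => f p.1 p.2).symm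

theorem prod_gaussianPDFReal_edge [Fintype ι] (v : ℝ≥0) (l : Edge ι → ℝ) :
    ∏ e, gaussianPDFReal 0 v (l e) =
      (2 * π * v) ^ (-((Fintype.card ι : ℝ) * (Fintype.card ι - 1)) / 4) *
        exp (-(∑ e, l e ^ 2) / (2 * v)) := by
  rw [prod_gaussianPDFReal_const, card_edge, ← neg_div, div_div]
  norm_num

/-- The strictly lower triangular matrix `L` with the edge weights `l` as its entries. -/
def strictLower (l : Edge ι → ℝ) : Matrix ι ι ℝ :=
  of fun i j => if h : j < i then l ⟨(i, j), h⟩ else 0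

/-- The weighted adjacency matrix `W = P L Pᵀ` of the structural equation model, where `σ` sends
each position in the topological order to the node occupying it. -/
def weightMatrix (σ : ι ≃ n) (l : Edge ι → ℝ) : Matrix n n ℝ :=
  (strictLower l).submatrix σ.symm σ.symm

theorem isLowerTriangular_one_sub_strictLower (l : Edge ι → ℝ) :
    (1 - strictLower l).IsLowerTriangular := by
  intro i j hij
  replace hij : i < j := hij
  simp [strictLower, hij.ne, hij.not_gt]

/-- The design matrix of the regression of the nodes on their potential parents: the matrix, for a
fixed data point `x`, of the linear map `l ↦ W x` from edge weights to nodes. -/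
def parentDesign [DecidableEq n] (σ : ι ≃ n) (x : n → ℝ) : Matrix n (Edge ι) ℝ :=
  of fun i e => if σ e.1.1 = i then x (σ e.1.2) else 0

variable [Fintype n]

/-- The diagonal entry `D i i` of the paper: the sum of the squares of the coordinates of `x` at the
potential parents of the node `i`. -/
def parentSqNorm (σ : ι ≃ n) (x : n → ℝ) (i : n) : ℝ≥0 :=
  ∑ j with σ.symm j < σ.symm i, ‖x j‖₊ ^ 2

theorem parentSqNorm_of_isBot (σ : ι ≃ n) (x : n → ℝ) {k : ι} (hk : IsBot k) :
    parentSqNorm σ x (σ k) = 0 := by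
  simp [parentSqNorm, (hk _).not_gt]

theorem parentSqNorm_ne_zero (σ : ι ≃ n) {x : n → ℝ} {k : ι} (hk : IsBot k) (hx : x (σ k) ≠ 0)
    {i : n} (hi : i ≠ σ k) : parentSqNorm σ x i ≠ 0 := by
  have hlt : k < σ.symm i := (hk _).lt_of_ne fun h => hi (by simp [h])
  exact (sum_pos' (fun _ _ => zero_le) ⟨σ k, by simpa using hlt, pow_pos (nnnorm_pos.2 hx) 2⟩).ne'

theorem weightMatrix_one_mulVec_sq (σ : ι ≃ n) (x : n → ℝ) :
    (weightMatrix σ fun _ => 1) *ᵥ (fun j => x j ^ 2) = fun i => (parentSqNorm σ x i : ℝ) := by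
  ext i
  simp [mulVec, dotProduct, weightMatrix, strictLower, parentSqNorm, sum_filter, apply_ite]

theorem det_one_sub_weightMatrix [DecidableEq n] (σ : ι ≃ n) (l : Edge ι → ℝ) :
    (1 - weightMatrix σ l).det = 1 := by
  have := Fintype.ofEquiv n σ.symm
  have hsub : 1 - weightMatrix σ l = (1 - strictLower l).submatrix σ.symm σ.symm := by
    rw [submatrix_sub, Pi.sub_apply, Pi.sub_apply, submatrix_one_equiv, weightMatrix]
  rw [hsub, det_submatrix_equiv_self,
    det_of_isLowerTriangular _ (isLowerTriangular_one_sub_strictLower l)]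
  simp [strictLower]

variable [Fintype ι] [DecidableEq n]

theorem weightMatrix_mulVec (σ : ι ≃ n) (l : Edge ι → ℝ) (x : n → ℝ) :
    weightMatrix σ l *ᵥ x = parentDesign σ x *ᵥ l := by
  ext i
  obtain ⟨k, rfl⟩ := σ.surjective i
  have hl (e : Edge ι) : l e = strictLower l e.1.1 e.1.2 := by simp [strictLower, e.2]
  simp only [mulVec, dotProduct, parentDesign, of_apply, σ.injective.eq_iff, hl]
  rw [sum_edge fun i j => (if i = k then x (σ j) else 0) * strictLower l i j,
    sum_eq_single k (by simp_all) (by simp), ← σ.sum_comp]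
  refine sum_congr rfl fun j _ => ?_
  by_cases hjk : j < k <;> simp [weightMatrix, strictLower, hjk, mul_comm]

theorem parentDesign_mul_transpose (σ : ι ≃ n) (x : n → ℝ) :
    parentDesign σ x * (parentDesign σ x)ᵀ = diagonal fun i => (parentSqNorm σ x i : ℝ) := by
  ext i j
  obtain rfl | hij := eq_or_ne i j
  · rw [← weightMatrix_one_mulVec_sq, weightMatrix_mulVec, diagonal_apply_eq]
    simp [mul_apply, mulVec, dotProduct, parentDesign, ← sq, ite_pow]
  · rw [diagonal_apply_ne _ hij, mul_apply]
    refine sum_eq_zero fun e _ => ?_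
    simp only [transpose_apply, parentDesign, of_apply]
    grind

theorem integral_precisionPDF_weightMatrix (σ : ι ≃ n) {t : n → ℝ≥0} (ht : ∀ i, t i ≠ 0)
    (v : ℝ≥0) (x : n → ℝ) :
    ∫ l, precisionPDF ((1 - weightMatrix σ l)ᵀ * (diagonal fun i => (t i : ℝ))⁻¹ *
        (1 - weightMatrix σ l)) x ∂Measure.pi (fun _ : Edge ι => gaussianReal 0 v) =
      ∏ i, gaussianPDFReal 0 (t i + v * parentSqNorm σ x i) (x i) := by
  have hA : parentDesign σ x * (diagonal fun _ => (v : ℝ) : Matrix (Edge ι) (Edge ι) ℝ) *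
      (parentDesign σ x)ᵀ = diagonal fun i => ((v * parentSqNorm σ x i : ℝ≥0) : ℝ) := by
    rw [← smul_eq_mul_diagonal, Matrix.smul_mul, parentDesign_mul_transpose, ← diagonal_smul]
    rfl
  simp_rw [precisionPDF_transpose_mul_inv_diagonal_mul _ ht, det_one_sub_weightMatrix, abs_one,
    one_mul, sub_mulVec, one_mulVec, weightMatrix_mulVec]
  simpa only [Pi.zero_apply, mulVec_zero] using integral_prod_gaussianPDFReal_sub_mulVec hA ht 0 x

end SEM

section ClosedForm

open ProbabilityTheory
open scoped NNReal

variable {n : Type*} [Fintype n] [DecidableEq n]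

theorem prod_sqrt_sq_add_eq {s w : n → ℝ}
    (hs : ∀ j, 0 < s j) (hw : ∀ j, 0 < w j) {ν : ℝ} (hν : 0 < ν) :
    ∏ j, √(s j ^ 2 + ν ^ 2 * w j) = (∏ j, s j) * ν ^ Fintype.card n * √(diagonal w).det *
      √((diagonal fun j => s j ^ 2)⁻¹ + (ν ^ 2)⁻¹ • (diagonal w)⁻¹).det := by
  have hA : (diagonal fun j => s j ^ 2).det = (∏ j, s j) ^ 2 := by rw [det_diagonal, prod_pow]
  have hs0 : 0 < ∏ j, s j := prod_pos fun j _ => hs j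
  have hw0 : 0 < (diagonal w).det := by
    rw [det_diagonal]; exact prod_pos fun j _ => hw j
  have hsum : ∏ j, (s j ^ 2 + ν ^ 2 * w j) =
      ((diagonal fun j => s j ^ 2) + ν ^ 2 • diagonal w).det := by
    rw [← diagonal_smul, diagonal_add, det_diagonal]; rfl
  rw [← sqrt_prod _ fun j _ => by have := hw j; positivity, hsum,
    det_add_smul_eq (by rw [hA]; positivity) hw0.ne' (by positivity), hA, pow_right_comm,
    mul_right_comm, ← mul_assoc, ← mul_pow, sqrt_mul (by positivity), sqrt_mul (by positivity),
    sqrt_sq (by positivity)]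

theorem prod_sqrt_sq_add_eq_of_eq_zero {s w : n → ℝ} (hs : ∀ j, 0 < s j) {r : n} (hr : w r = 0)
    (hw : ∀ j, j ≠ r → 0 < w j) {ν : ℝ} (hν : 0 < ν) {A D : Matrix {j // j ≠ r} {j // j ≠ r} ℝ}
    (hA : A = (diagonal fun j => s j ^ 2).submatrix Subtype.val Subtype.val)
    (hD : D = (diagonal w).submatrix Subtype.val Subtype.val) :
    ∏ j, √(s j ^ 2 + ν ^ 2 * w j) =
      (∏ j, s j) * ν ^ ((Fintype.card n : ℝ) - 1) * √D.det * √(A⁻¹ + (ν ^ 2)⁻¹ • D⁻¹).det := by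
  have hcard : ν ^ ((Fintype.card n : ℝ) - 1) = ν ^ Fintype.card {j // j ≠ r} := by
    rw [← rpow_natCast, ← Nat.cast_pred (Fintype.card_pos_iff.2 ⟨r⟩), Fintype.card_subtype_compl,
      Fintype.card_subtype_eq]
  rw [submatrix_diagonal _ _ Subtype.val_injective] at hA hD
  subst hA hD
  rw [Fintype.prod_eq_mul_prod_subtype_ne _ r, Fintype.prod_eq_mul_prod_subtype_ne s r, hr,
    mul_zero, add_zero, sqrt_sq (hs r).le, hcard,
    prod_sqrt_sq_add_eq (s := fun j : {j // j ≠ r} => s j) (w := fun j : {j // j ≠ r} => w j)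
      (fun j => hs j.1) (fun j => hw j.1 j.2) hν]
  simp only [mul_assoc]
  rfl

theorem prod_gaussianPDFReal_sq_add {s w : n → ℝ≥0} (hs : ∀ j, s j ≠ 0) {r : n} (hr : w r = 0)
    (hw : ∀ j, j ≠ r → w j ≠ 0) {ν : ℝ≥0} (hν : ν ≠ 0) {A D : Matrix {j // j ≠ r} {j // j ≠ r} ℝ}
    (hA : A = (diagonal fun j => (s j : ℝ) ^ 2).submatrix Subtype.val Subtype.val)
    (hD : D = (diagonal fun j => (w j : ℝ)).submatrix Subtype.val Subtype.val) (x : n → ℝ) :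
    ∏ j, gaussianPDFReal 0 (s j ^ 2 + ν ^ 2 * w j) (x j) =
      (2 * π) ^ (-(Fintype.card n : ℝ) / 2) * (∏ j, (s j : ℝ))⁻¹ *
        (ν : ℝ) ^ (-((Fintype.card n : ℝ) - 1)) * (√D.det)⁻¹ *
        (√(A⁻¹ + ((ν : ℝ) ^ 2)⁻¹ • D⁻¹).det)⁻¹ *
        exp (-(1 / 2) * (x ⬝ᵥ ((diagonal fun j => (s j : ℝ) ^ 2)⁻¹ *ᵥ x)) +
          (1 / 2) * (x ⬝ᵥ ((diagonal fun j => (ν : ℝ) ^ 2 * w j /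
            ((s j : ℝ) ^ 2 * ((s j : ℝ) ^ 2 + (ν : ℝ) ^ 2 * w j))) *ᵥ x))) := by
  have hs' (j : n) : (0 : ℝ) < s j := NNReal.coe_pos.2 (hs j).bot_lt
  have hw' (j : n) (hj : j ≠ r) : (0 : ℝ) < w j := NNReal.coe_pos.2 (hw j hj).bot_lt
  rw [prod_gaussianPDFReal]
  push_cast
  rw [prod_sqrt_sq_add_eq_of_eq_zero hs' (NNReal.coe_eq_zero.2 hr) hw'
      (NNReal.coe_pos.2 hν.bot_lt) hA hD,
    ← dotProduct_inv_diagonal_mulVec_sub (fun j => (pow_pos (hs' j) 2).ne') fun j => by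
      have := hs' j
      positivity,
    rpow_neg ν.coe_nonneg, mul_inv, mul_inv, mul_inv]
  ring_nf

end ClosedForm

/-- Theorem 1 of the paper: analytic marginalization of the isotropic Gaussian prior
over the edge weights `l ∈ ℝ^{d(d-1)/2}` of a linear-Gaussian SEM.  Here the
edge-weight space `ℝ^{d(d-1)/2}` is realised as the functions on the set of strictly
lower-triangular index pairs `{(i,j) : j < i}`, `L l` is the strictly
lower-triangular matrix with entries `l`, `Θ l = (I - P L Pᵀ)ᵀ Σ⁻¹ (I - P L Pᵀ)` is
the SEM precision matrix, `G` is the strictly lower-triangular all-ones matrix,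
`D = diag(P G Pᵀ (x ∘ x))`, `S` is diagonal with
`S_jj = ν² D_jj / (s_j² (s_j² + ν² D_jj))`, and `D'`, `Σ'` delete the row and column
of index `σ(1)` from `D` and `Σ`. -/
theorem stmt_0 (d : ℕ) (hd : 2 ≤ d) (σ : Equiv.Perm (Fin d))
    (P : Matrix (Fin d) (Fin d) ℝ)
    (hP : ∀ i j, P i j = if i = σ j then 1 else 0)
    (s : Fin d → ℝ) (hs : ∀ j, 0 < s j)
    (Sig : Matrix (Fin d) (Fin d) ℝ)
    (hSig : Sig = Matrix.diagonal fun j => (s j) ^ 2)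
    (ν : ℝ) (hν : 0 < ν)
    (Lf : ({p : Fin d × Fin d // p.2 < p.1} → ℝ) → Matrix (Fin d) (Fin d) ℝ)
    (hLf : ∀ l i j, Lf l i j = if h : j < i then l ⟨(i, j), h⟩ else 0)
    (Θ : ({p : Fin d × Fin d // p.2 < p.1} → ℝ) → Matrix (Fin d) (Fin d) ℝ)
    (hΘ : ∀ l, Θ l = (1 - P * Lf l * Pᵀ)ᵀ * Sig⁻¹ * (1 - P * Lf l * Pᵀ))
    (G : Matrix (Fin d) (Fin d) ℝ)
    (hG : ∀ i j : Fin d, G i j = if j < i then 1 else 0)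
    (x : Fin d → ℝ) (hx : ∀ i, x i ≠ 0)
    (D : Matrix (Fin d) (Fin d) ℝ)
    (hD : D = Matrix.diagonal ((P * G * Pᵀ) *ᵥ fun k => (x k) ^ 2))
    (S : Matrix (Fin d) (Fin d) ℝ)
    (hS : S = Matrix.diagonal fun j =>
      ν ^ 2 * D j j / ((s j) ^ 2 * ((s j) ^ 2 + ν ^ 2 * D j j)))
    (i₀ : Fin d) (hi₀ : (i₀ : ℕ) = 0)
    (D' Sig' : Matrix {j : Fin d // j ≠ σ i₀} {j : Fin d // j ≠ σ i₀} ℝ)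
    (hD' : D' = D.submatrix Subtype.val Subtype.val)
    (hSig' : Sig' = Sig.submatrix Subtype.val Subtype.val) :
    ∫ l : ({p : Fin d × Fin d // p.2 < p.1} → ℝ),
        (2 * π) ^ (-(d : ℝ) / 2) * Real.sqrt (Θ l).det *
          Real.exp (-(1 / 2) * (x ⬝ᵥ ((Θ l) *ᵥ x))) *
        ((2 * π * ν ^ 2) ^ (-((d : ℝ) * ((d : ℝ) - 1)) / 4) *
          Real.exp (-(∑ p, (l p) ^ 2) / (2 * ν ^ 2)))
      = (2 * π) ^ (-(d : ℝ) / 2) * (∏ j, s j)⁻¹ * ν ^ (-((d : ℝ) - 1)) *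
          (Real.sqrt D'.det)⁻¹ *
          (Real.sqrt (Sig'⁻¹ + (ν ^ 2)⁻¹ • D'⁻¹).det)⁻¹ *
          Real.exp (-(1 / 2) * (x ⬝ᵥ (Sig⁻¹ *ᵥ x)) + (1 / 2) * (x ⬝ᵥ (S *ᵥ x))) := by
  have hW l : P * Lf l * Pᵀ = weightMatrix σ l := by
    rw [mul_mul_transpose_eq_submatrix_symm hP, show Lf l = strictLower l from ext (hLf l)]
    rfl
  have hD_diag : D = diagonal fun j => (parentSqNorm σ x j : ℝ) := by
    rw [hD, ← weightMatrix_one_mulVec_sq, mul_mul_transpose_eq_submatrix_symm hP,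
      show G = strictLower fun _ => 1 from ext hG]
    rfl
  have hbot : IsBot i₀ := fun j => by simp [Fin.le_def, hi₀]
  lift s to Fin d → NNReal using fun j => (hs j).le
  lift ν to NNReal using hν.le
  have hs0 j : s j ≠ 0 := (NNReal.coe_pos.1 (hs j)).ne'
  have hν0 : ν ≠ 0 := (NNReal.coe_pos.1 hν).ne'
  simp_rw [hD_diag, diagonal_apply_eq] at hS hD'
  rw [hSig] at hSig'
  have hclosed := prod_gaussianPDFReal_sq_add hs0 (parentSqNorm_of_isBot σ x hbot)
    (fun j => parentSqNorm_ne_zero σ hbot (hx _)) hν0 hSig' hD' x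
  rw [Fintype.card_fin] at hclosed
  rw [hSig, hS, ← hclosed,
    ← integral_precisionPDF_weightMatrix σ (fun j => pow_ne_zero 2 (hs0 j)),
    integral_pi_gaussianReal_eq_integral_smul _ fun _ => pow_ne_zero 2 hν0]
  refine integral_congr_ae (ae_of_all _ fun l => ?_)
  simp only [prod_gaussianPDFReal_edge, precisionPDF, hΘ, hW, hSig, Fintype.card_fin, smul_eq_mul,
    NNReal.coe_pow]
  exact mul_comm _ _
end

section
/- Let d ≥ 1, let σ be a permutation of {1,…,d} with permutation matrix P ∈ ℝ^{d×d} (P_{ij} = 1 if i = σ(j), else 0), and let x ∈ ℝ^d with x_{σ(1)} ≠ 0. For l ∈ ℝ^{d(d−1)/2} let L(l) be the strictly lower-triangular matrix with those entries. Then the linear map φ : ℝ^{d(d−1)/2} → ℝ^d, φ(l) = P L(l) Pᵀ x, has range exactly the hyperplane {v ∈ ℝ^d : v_{σ(1)} = 0}. -/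
open Matrix

/-! Conjugation by `P` only relabels coordinates: `P L Pᵀ x = (L (x ∘ σ)) ∘ σ⁻¹`, so one may take
`P = 1`. A strictly lower-triangular matrix has zero first row, and its first column is otherwise
free; when the first coordinate of `y` has a left inverse, the rank-one matrices supported on the
first column already send `y` to every vector with vanishing first coordinate. -/

variable {m n R : Type*}

/-- Strictly lower-triangular square matrices: the matrices `L(l)`, for an arbitrary order on the
index type instead of that of `Fin d`. Asking for `¬ j < i` rather than `i ≤ j` makes entries at
incomparable indices vanish too. -/
def IsStrictlyLowerTriangular [LT n] [Zero R] (L : Matrix n n R) : Prop :=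
  ∀ i j, ¬ j < i → L i j = 0

theorem IsStrictlyLowerTriangular.mulVec_apply_of_isMin [Preorder n] [Fintype n]
    [NonUnitalNonAssocSemiring R] {L : Matrix n n R} (hL : IsStrictlyLowerTriangular L)
    {b : n} (hb : IsMin b) (y : n → R) : (L *ᵥ y) b = 0 := by
  have row_eq_zero : L b = 0 := funext fun j => hL b j hb.not_lt
  rw [mulVec, row_eq_zero, zero_dotProduct]

theorem isStrictlyLowerTriangular_vecMulVec_single [PartialOrder n] [DecidableEq n]
    [MulZeroClass R] {b : n} (hb : IsBot b) {w : n → R} (hw : w b = 0) (a : R) :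
    IsStrictlyLowerTriangular (vecMulVec w (Pi.single b a)) := by
  intro i j hij
  rw [vecMulVec_apply]
  obtain rfl | hj := eq_or_ne j b
  · obtain rfl : j = i := (hb i).eq_of_not_lt hij
    rw [hw, zero_mul]
  · rw [Pi.single_eq_of_ne hj, mul_zero]

theorem vecMulVec_single_mulVec [Fintype n] [DecidableEq n] [Semiring R] {b : n} {y : n → R}
    {a : R} (ha : a * y b = 1) (w : m → R) : vecMulVec w (Pi.single b a) *ᵥ y = w := by
  rw [vecMulVec_mulVec, single_dotProduct, ha, MulOpposite.op_one, one_smul]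

theorem setOf_isStrictlyLowerTriangular_mulVec_eq [PartialOrder n] [Fintype n] [Semiring R]
    {b : n} (hb : IsBot b) {y : n → R} {a : R} (ha : a * y b = 1) :
    {w : n → R | ∃ L : Matrix n n R, IsStrictlyLowerTriangular L ∧ w = L *ᵥ y} =
      {w | w b = 0} := by
  classical
  ext w
  constructor
  · rintro ⟨L, hL, rfl⟩
    exact hL.mulVec_apply_of_isMin hb.isMin y
  · intro hw
    exact ⟨_, isStrictlyLowerTriangular_vecMulVec_single hb hw a,
      (vecMulVec_single_mulVec ha w).symm⟩

theorem eq_toMatrix_toPEquiv_symm [DecidableEq m] [DecidableEq n] [Zero R] [One R] {σ : n ≃ m}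
    {P : Matrix m n R} (hP : ∀ i j, P i j = if i = σ j then 1 else 0) :
    P = σ.symm.toPEquiv.toMatrix := by
  ext i j
  simp only [hP, PEquiv.toMatrix_toPEquiv_apply, Pi.single_apply, Equiv.eq_symm_apply, eq_comm]

theorem permMatrix_conj_mulVec [Fintype m] [Fintype n] [DecidableEq m] [Semiring R] {σ : n ≃ m}
    {P : Matrix m n R} (hP : ∀ i j, P i j = if i = σ j then 1 else 0) (L : Matrix n n R)
    (x : m → R) : (P * L * Pᵀ) *ᵥ x = (L *ᵥ (x ∘ σ)) ∘ σ.symm := by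
  classical
  rw [← mulVec_mulVec, ← mulVec_mulVec, eq_toMatrix_toPEquiv_symm hP, ← PEquiv.toMatrix_symm,
    ← Equiv.toPEquiv_symm, Equiv.symm_symm, PEquiv.toMatrix_toPEquiv_mulVec,
    PEquiv.toMatrix_toPEquiv_mulVec]

theorem stmt_9_general [Fintype m] [DecidableEq m] [PartialOrder n] [Fintype n] [Semiring R]
    {b : n} (hb : IsBot b) {σ : n ≃ m} {P : Matrix m n R}
    (hP : ∀ i j, P i j = if i = σ j then 1 else 0) {x : m → R} {a : R} (ha : a * x (σ b) = 1) :
    {v : m → R | ∃ L : Matrix n n R, IsStrictlyLowerTriangular L ∧ v = (P * L * Pᵀ) *ᵥ x} =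
      {v | v (σ b) = 0} := by
  ext v
  simp only [permMatrix_conj_mulVec hP, Equiv.eq_comp_symm]
  exact Set.ext_iff.mp (setOf_isStrictlyLowerTriangular_mulVec_eq (y := x ∘ σ) hb ha) (v ∘ σ)

/-- For `P` the permutation matrix of a permutation `σ` and `x ∈ ℝ^d` with
`x_{σ(1)} ≠ 0`, the linear map `l ↦ P L(l) Pᵀ x` (where `L(l)` ranges over all
strictly lower-triangular matrices as `l` ranges over `ℝ^{d(d-1)/2}`) has range
exactly the hyperplane `{v : v_{σ(1)} = 0}`. -/
theorem stmt_9 (d : ℕ) (hd : 1 ≤ d) (σ : Equiv.Perm (Fin d))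
    (P : Matrix (Fin d) (Fin d) ℝ)
    (hP : ∀ i j, P i j = if i = σ j then 1 else 0)
    (x : Fin d → ℝ) (hx : x (σ ⟨0, hd⟩) ≠ 0) :
    {v : Fin d → ℝ | ∃ L : Matrix (Fin d) (Fin d) ℝ,
        (∀ i j : Fin d, ¬ j < i → L i j = 0) ∧ v = (P * L * Pᵀ) *ᵥ x} =
      {v : Fin d → ℝ | v (σ ⟨0, hd⟩) = 0} := by
  have isBot_zero : IsBot (⟨0, hd⟩ : Fin d) := fun i => Nat.zero_le i
  exact stmt_9_general isBot_zero hP (inv_mul_cancel₀ hx)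
end
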